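/- arXiv:2308.03071 — 2 statements merged into one kernel-verified Lean document; each statement's English description precedes it below -/
import Mathlib

section
/- Let d ≥ 2 and let Λ ⊆ K̃^d be a lattice. Then the covering radius of Λ with respect to the sup-norm satisfies CovRad_{O^d}(Λ) = q^{-1}·λ_d(Λ); that is, sup_{w ∈ K̃^d} inf_{u ∈ Λ} ‖w − u‖ = q^{-1}·λ_d(Λ). -/
noncomputable section

open scoped Classical

variable (Fq : Type) [Field Fq] [Fintype Fq]

/-- `K̃ = 𝔽_q((x⁻¹))`, realized as formal Laurent series in `t = x⁻¹`. -/
abbrev Kt := LaurentSeries Fq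

/-- The element `x` of `K̃` (the inverse of the Laurent series variable). -/
def Kx : Kt Fq := HahnSeries.single (-1 : ℤ) 1

/-- Absolute value `|f| = q^{deg f}`, i.e. `q^{-order f}` in terms of `t = x⁻¹`. -/
def Kabs (f : Kt Fq) : ℝ := if f = 0 then 0 else (Fintype.card Fq : ℝ) ^ (-f.order)

/-- The ring embedding of `R = 𝔽_q[x]` into `K̃`. -/
def polyK : Polynomial Fq →+* Kt Fq := (Polynomial.aeval (Kx Fq)).toRingHom

/-- Sup norm on `K̃^d`. -/
def vnorm {d : ℕ} (v : Fin d → Kt Fq) : ℝ := ⨆ i, Kabs Fq (v i)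

/-- The lattice `g·R^d`. -/
def lattice {d : ℕ} (g : Matrix (Fin d) (Fin d) (Kt Fq)) : Set (Fin d → Kt Fq) :=
  {v | ∃ c : Fin d → Polynomial Fq, v = g.mulVec fun j => polyK Fq (c j)}

/-- `i`-th successive minimum of `Λ` with respect to a norm `nrm`: the least `r > 0` such that
`Λ` contains `i` linearly independent vectors of norm at most `r`. -/
def minimaN {d : ℕ} (nrm : (Fin d → Kt Fq) → ℝ) (Λ : Set (Fin d → Kt Fq)) (i : ℕ) : ℝ :=
  sInf {r : ℝ | 0 < r ∧ ∃ v : Fin i → Fin d → Kt Fq,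
    (∀ j, v j ∈ Λ) ∧ LinearIndependent (Kt Fq) v ∧ ∀ j, nrm (v j) ≤ r}

/-- `i`-th successive minimum with respect to the sup norm. -/
def minima {d : ℕ} (Λ : Set (Fin d → Kt Fq)) (i : ℕ) : ℝ := minimaN Fq (vnorm Fq) Λ i

/-- Covering radius of `Λ` with respect to the norm `nrm`. -/
def covRad {d : ℕ} (nrm : (Fin d → Kt Fq) → ℝ) (Λ : Set (Fin d → Kt Fq)) : ℝ :=
  ⨆ w : Fin d → Kt Fq, ⨅ u : Λ, nrm (w - u.1)

/-- Length of the shortest nonzero vector of `Λ`. -/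
def ell {d : ℕ} (Λ : Set (Fin d → Kt Fq)) : ℝ :=
  sInf {r : ℝ | ∃ v ∈ Λ, v ≠ 0 ∧ vnorm Fq v = r}

/-- `Λ` is well rounded: it contains `d` linearly independent vectors of norm `ℓ(Λ)`. -/
def IsWellRounded {d : ℕ} (Λ : Set (Fin d → Kt Fq)) : Prop :=
  ∃ v : Fin d → Fin d → Kt Fq, (∀ j, v j ∈ Λ) ∧ LinearIndependent (Kt Fq) v ∧
    ∀ j, vnorm Fq (v j) = ell Fq Λ

/-- The multiplicative "norm" `N(v) = ∏ |v i|`. -/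
def Nprod {d : ℕ} (v : Fin d → Kt Fq) : ℝ := ∏ i, Kabs Fq (v i)

/-- The Minkowski function `μ(Λ) = sup_w inf_{u ∈ Λ} N(w - u)`. -/
def mink {d : ℕ} (Λ : Set (Fin d → Kt Fq)) : ℝ :=
  ⨆ w : Fin d → Kt Fq, ⨅ u : Λ, Nprod Fq (w - u.1)

/-!
Let `r > 0`. Closed balls of radius `q⁻¹ r` around the points of `Λ` cover `K̃^d` if and only if the
vectors of `Λ` of norm at most `r` span `K̃^d`; the theorem follows by taking infima over `r`.

If these vectors span, expand `w` in terms of them and replace each coefficient by its polynomial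
part: the fractional parts have absolute value at most `q⁻¹`. Conversely, suppose that the balls
cover. Given `u ∈ Λ`, choose `u' ∈ Λ` with `‖x⁻¹ u - u'‖ ≤ q⁻¹ r`. Then `u - x u' ∈ Λ` has norm at
most `r`, while `‖u'‖ ≤ q⁻¹ max ‖u‖ r`, so descending on the norm puts `u` in the span.
-/

section Covering

variable {K E : Type*}

/-- Closed `N`-balls of radius `r` centred at the points of `Λ` cover the whole space; the
covering radius is the infimum of such `r`, see `covRad_eq_sInf`. -/
def CoversWithin [Sub E] (N : E → ℝ) (Λ : Set E) (r : ℝ) : Prop :=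
  ∀ w, ∃ u ∈ Λ, N (w - u) ≤ r

lemma coversWithin_of_span_eq_top [SeminormedRing K] [AddCommGroup E] [Module K E]
    {N : Seminorm K E} (hN : IsNonarchimedean N) {R : Subring K} {Λ : Submodule R E} {δ r : ℝ}
    (hR : CoversWithin norm (R : Set K) δ) (hr : 0 ≤ r)
    (hspan : Submodule.span K {u | u ∈ Λ ∧ N u ≤ r} = ⊤) :
    CoversWithin N (Λ : Set E) (δ * r) := by
  have hδ : 0 ≤ δ := by
    obtain ⟨p, -, hp⟩ := hR 0
    exact (norm_nonneg _).trans hp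
  intro w
  have hw : w ∈ Submodule.span K {u | u ∈ Λ ∧ N u ≤ r} := hspan ▸ Submodule.mem_top
  induction hw using Submodule.closure_induction with
  | zero => exact ⟨0, Λ.zero_mem, by simpa using mul_nonneg hδ hr⟩
  | add v w _ _ ihv ihw =>
    obtain ⟨a, ha, hva⟩ := ihv
    obtain ⟨b, hb, hwb⟩ := ihw
    refine ⟨a + b, Λ.add_mem ha hb, ?_⟩
    rw [add_sub_add_comm]
    exact (hN _ _).trans (max_le hva hwb)
  | smul_mem a u hu =>
    obtain ⟨p, hp, hap⟩ := hR a
    refine ⟨p • u, Λ.smul_mem ⟨p, hp⟩ hu.1, ?_⟩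
    rw [← sub_smul, map_smul_eq_mul]
    exact mul_le_mul hap hu.2 (apply_nonneg N u) hδ

section NormedDivisionRing

variable [NormedDivisionRing K] [AddCommGroup E] [Module K E] {N : Seminorm K E} {x : K} {r : ℝ}

lemma subset_span_of_coversWithin (hN : IsNonarchimedean N) {Λ : AddSubgroup E} (hx : 1 < ‖x‖)
    (hxΛ : ∀ u ∈ Λ, x • u ∈ Λ) (hr : 0 < r) (hcov : CoversWithin N (Λ : Set E) (‖x‖⁻¹ * r)) :
    (Λ : Set E) ⊆ Submodule.span K {u | u ∈ Λ ∧ N u ≤ r} := by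
  have hx0 : 0 < ‖x‖ := one_pos.trans hx
  set V := Submodule.span K {u | u ∈ Λ ∧ N u ≤ r}
  have mem_of_le_pow (n : ℕ) : ∀ u ∈ Λ, N u ≤ ‖x‖ ^ n * r → u ∈ V := by
    induction n with
    | zero => exact fun u hu hNu => Submodule.subset_span ⟨hu, by simpa using hNu⟩
    | succ n ih =>
      intro u hu hNu
      obtain ⟨u', hu', hdist⟩ := hcov (x⁻¹ • u)
      have hNxu : N (x⁻¹ • u) ≤ ‖x‖ ^ n * r := by
        rw [map_smul_eq_mul, norm_inv, inv_mul_le_iff₀ hx0]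
        exact hNu.trans_eq (by ring)
      have hdist' : N (x⁻¹ • u - u') ≤ ‖x‖ ^ n * r := by
        refine hdist.trans (mul_le_mul_of_nonneg_right ?_ hr.le)
        exact (inv_le_one_of_one_le₀ hx.le).trans (one_le_pow₀ hx.le)
      have hu'V : u' ∈ V := by
        refine ih u' hu' ?_
        calc N u' = N (x⁻¹ • u + -(x⁻¹ • u - u')) := by congr 1; abel
          _ ≤ max (N (x⁻¹ • u)) (N (-(x⁻¹ • u - u'))) := hN _ _
          _ ≤ ‖x‖ ^ n * r := max_le hNxu (by rwa [map_neg_eq_map])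
      have hsub : u - x • u' = x • (x⁻¹ • u - u') := by
        rw [smul_sub, smul_inv_smul₀ (norm_pos_iff.1 hx0)]
      have hsubV : u - x • u' ∈ V := by
        refine Submodule.subset_span ⟨Λ.sub_mem hu (hxΛ u' hu'), ?_⟩
        rwa [hsub, map_smul_eq_mul, ← le_inv_mul_iff₀ hx0]
      exact (V.sub_mem_iff_left (V.smul_mem x hu'V)).1 hsubV
  intro u hu
  obtain ⟨n, hn⟩ := pow_unbounded_of_one_lt (N u / r) hx
  exact mem_of_le_pow n u hu ((div_lt_iff₀ hr).1 hn).le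

theorem coversWithin_inv_mul_iff_span_eq_top (hN : IsNonarchimedean N) {R : Subring K}
    (hxR : x ∈ R) (hx : 1 < ‖x‖) (hR : CoversWithin norm (R : Set K) ‖x‖⁻¹) {Λ : Submodule R E}
    (hΛ : Submodule.span K (Λ : Set E) = ⊤) (hr : 0 < r) :
    CoversWithin N (Λ : Set E) (‖x‖⁻¹ * r) ↔
      Submodule.span K {u | u ∈ Λ ∧ N u ≤ r} = ⊤ := by
  refine ⟨fun hcov => ?_, coversWithin_of_span_eq_top hN hR hr.le⟩
  rw [eq_top_iff, ← hΛ, Submodule.span_le]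
  exact subset_span_of_coversWithin (Λ := Λ.toAddSubgroup) hN hx
    (fun u hu => Λ.smul_mem ⟨x, hxR⟩ hu) hr hcov

end NormedDivisionRing

end Covering

section Span

variable {K E : Type*} [DivisionRing K] [AddCommGroup E] [Module K E] [FiniteDimensional K E]

lemma span_eq_top_iff_exists_linearIndependent {n : ℕ} (hn : Module.finrank K E = n) {s : Set E} :
    Submodule.span K s = ⊤ ↔
      ∃ v : Fin n → E, (∀ j, v j ∈ s) ∧ LinearIndependent K v := by
  constructor
  · intro hs
    obtain ⟨v, hv, -, hli⟩ := Submodule.exists_fun_fin_finrank_span_eq K s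
    have hfin : n = Module.finrank K (Submodule.span K s) := by rw [hs, finrank_top, hn]
    exact ⟨v ∘ Fin.cast hfin, fun j => hv _, hli.comp _ (Fin.cast_injective hfin)⟩
  · rintro ⟨v, hv, hli⟩
    rw [eq_top_iff, ← hli.span_eq_top_of_card_eq_finrank' (by simp [hn])]
    exact Submodule.span_mono (Set.range_subset_iff.2 hv)

lemma exists_pos_span_setOf_le_eq_top {Λ : Set E} (hΛ : Submodule.span K Λ = ⊤) (N : E → ℝ) :
    ∃ r, 0 < r ∧ Submodule.span K {u | u ∈ Λ ∧ N u ≤ r} = ⊤ := by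
  obtain ⟨v, hv, hli⟩ := (span_eq_top_iff_exists_linearIndependent rfl).1 hΛ
  obtain ⟨b, hb⟩ := (Set.finite_range (N ∘ v)).bddAbove
  refine ⟨max b 1, by positivity, (span_eq_top_iff_exists_linearIndependent rfl).2 ⟨v, ?_, hli⟩⟩
  exact fun j => ⟨hv j, (hb ⟨j, rfl⟩).trans (le_max_left b 1)⟩

end Span

lemma span_col_eq_top_of_det_ne_zero {K n : Type*} [Field K] [Fintype n] [DecidableEq n]
    {g : Matrix n n K} (hg : g.det ≠ 0) : Submodule.span K (Set.range g.col) = ⊤ :=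
  (Matrix.linearIndependent_cols_of_det_ne_zero hg).span_eq_top_of_card_eq_finrank' (by simp)

lemma one_lt_cast_card {α : Type*} [Fintype α] [Nontrivial α] : (1 : ℝ) < Fintype.card α :=
  Nat.one_lt_cast.2 Fintype.one_lt_card

section LaurentSeries

variable {Fq}

omit [Fintype Fq] in
lemma coeff_polyK (p : Polynomial Fq) (n : ℕ) : (polyK Fq p).coeff (-n : ℤ) = p.coeff n := by
  have polyK_monomial (m : ℕ) (a : Fq) :
      polyK Fq (Polynomial.monomial m a) = HahnSeries.single (-m : ℤ) a := by
    simp [polyK, Kx, Polynomial.aeval_monomial, HahnSeries.algebraMap_apply',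
      HahnSeries.single_pow, HahnSeries.single_mul_single]
  induction p using Polynomial.induction_on' with
  | add p q hp hq => simp [hp, hq]
  | monomial m a =>
    simp [polyK_monomial, HahnSeries.coeff_single, Polynomial.coeff_monomial, eq_comm]

omit [Fintype Fq] in
lemma exists_polynomial_coeff_eq (f : Kt Fq) :
    ∃ p : Polynomial Fq, ∀ n : ℕ, p.coeff n = f.coeff (-n : ℤ) := by
  refine ⟨∑ n ∈ Finset.range ((-f.order).toNat + 1), Polynomial.monomial n (f.coeff (-n : ℤ)),
    fun n => ?_⟩
  simp only [Polynomial.finsetSum_coeff, Polynomial.coeff_monomial, Finset.sum_ite_eq',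
    Finset.mem_range, ite_eq_left_iff]
  intro hn
  exact (HahnSeries.coeff_eq_zero_of_lt_order (by omega)).symm

lemma Kabs_of_ne_zero {f : Kt Fq} (hf : f ≠ 0) :
    Kabs Fq f = (Fintype.card Fq : ℝ) ^ (-f.order) := if_neg hf

lemma Kabs_le_zpow_iff {f : Kt Fq} {n : ℤ} :
    Kabs Fq f ≤ (Fintype.card Fq : ℝ) ^ (-n) ↔ ∀ i < n, f.coeff i = 0 := by
  rcases eq_or_ne f 0 with rfl | hf
  · simp [Kabs, zpow_nonneg]
  rw [Kabs_of_ne_zero hf, zpow_le_zpow_iff_right₀ one_lt_cast_card, neg_le_neg_iff]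
  refine ⟨fun h i hi => HahnSeries.coeff_eq_zero_of_lt_order (hi.trans_le h), fun h => ?_⟩
  by_contra! hlt
  exact hf (HahnSeries.coeff_order_eq_zero.1 (h _ hlt))

lemma Kabs_nonneg (f : Kt Fq) : 0 ≤ Kabs Fq f := by
  unfold Kabs
  positivity

lemma Kabs_mul (f g : Kt Fq) : Kabs Fq (f * g) = Kabs Fq f * Kabs Fq g := by
  rcases eq_or_ne f 0 with rfl | hf
  · simp [Kabs]
  rcases eq_or_ne g 0 with rfl | hg
  · simp [Kabs]
  rw [Kabs_of_ne_zero hf, Kabs_of_ne_zero hg, Kabs_of_ne_zero (mul_ne_zero hf hg),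
    HahnSeries.order_mul hf hg, neg_add, zpow_add₀ (one_pos.trans one_lt_cast_card).ne']

lemma isNonarchimedean_Kabs : IsNonarchimedean (Kabs Fq) := by
  intro f g
  rcases eq_or_ne f 0 with rfl | hf
  · simp
  rcases eq_or_ne g 0 with rfl | hg
  · simp
  rw [Kabs_of_ne_zero hf, Kabs_of_ne_zero hg, ← (zpow_right_mono₀ one_lt_cast_card.le).map_max,
    max_neg_neg, Kabs_le_zpow_iff]
  intro i hi
  obtain ⟨hif, hig⟩ := lt_min_iff.1 hi
  rw [HahnSeries.coeff_add, HahnSeries.coeff_eq_zero_of_lt_order hif,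
    HahnSeries.coeff_eq_zero_of_lt_order hig, add_zero]

/-- `Kabs` as an absolute value, from which the normed field structure on `K̃` is built. -/
def Kabs.absoluteValue : AbsoluteValue (Kt Fq) ℝ where
  toFun := Kabs Fq
  map_mul' := Kabs_mul
  nonneg' := Kabs_nonneg
  eq_zero' f := by
    have hq : (Fintype.card Fq : ℝ) ≠ 0 := (one_pos.trans one_lt_cast_card).ne'
    simp [Kabs, zpow_ne_zero _ hq]
  add_le' f g := (isNonarchimedean_Kabs f g).trans
    (max_le_add_of_nonneg (Kabs_nonneg f) (Kabs_nonneg g))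

/-- `K̃` normed by `Kabs`. The topology is not definitionally that of Mathlib's `Valued` instance
on Laurent series. -/
instance Kt.instNormedField : NormedField (Kt Fq) := Kabs.absoluteValue.toNormedField

lemma norm_eq_Kabs (f : Kt Fq) : ‖f‖ = Kabs Fq f := rfl

instance Kt.instIsUltrametricDist : IsUltrametricDist (Kt Fq) :=
  IsUltrametricDist.isUltrametricDist_of_isNonarchimedean_norm isNonarchimedean_Kabs

lemma norm_Kx : ‖Kx Fq‖ = Fintype.card Fq := by
  simp [norm_eq_Kabs, Kabs, Kx, HahnSeries.order_single]

omit [Fintype Fq] in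
lemma Kx_mem_range_polyK : Kx Fq ∈ (polyK Fq).range := ⟨Polynomial.X, by simp [polyK]⟩

lemma coversWithin_range_polyK : CoversWithin norm ((polyK Fq).range : Set (Kt Fq)) ‖Kx Fq‖⁻¹ := by
  intro f
  obtain ⟨p, hp⟩ := exists_polynomial_coeff_eq f
  refine ⟨polyK Fq p, ⟨p, rfl⟩, ?_⟩
  rw [norm_Kx, norm_eq_Kabs, ← zpow_neg_one, Kabs_le_zpow_iff]
  intro i hi
  obtain ⟨n, rfl⟩ : ∃ n : ℕ, i = -n := ⟨i.natAbs, by omega⟩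
  rw [HahnSeries.coeff_sub, coeff_polyK, hp, sub_self]

end LaurentSeries

section Lattice

variable {Fq} {d : ℕ}

lemma vnorm_eq_norm : vnorm Fq (d := d) = norm := by
  ext v
  refine le_antisymm (Real.iSup_le (norm_le_pi_norm v) (norm_nonneg v)) ?_
  refine (pi_norm_le_iff_of_nonneg (Real.iSup_nonneg fun i => Kabs_nonneg (v i))).2 fun i => ?_
  exact le_ciSup (f := fun i => Kabs Fq (v i)) (Set.finite_range _).bddAbove i

omit [Fintype Fq] in
lemma coe_span_col_eq_lattice (g : Matrix (Fin d) (Fin d) (Kt Fq)) :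
    (Submodule.span (polyK Fq).range (Set.range g.col) : Set (Fin d → Kt Fq)) = lattice Fq g := by
  ext v
  have mulVec_eq_sum_col (a : Fin d → Kt Fq) : g.mulVec a = ∑ j, a j • g.col j := by
    ext i
    simp [Matrix.mulVec, dotProduct, mul_comm]
  rw [SetLike.mem_coe, Submodule.mem_span_range_iff_exists_fun]
  constructor
  · rintro ⟨a, rfl⟩
    choose c hc using fun j => (a j).2
    exact ⟨c, by simp only [mulVec_eq_sum_col, hc, Subring.smul_def]⟩
  · rintro ⟨c, rfl⟩
    exact ⟨fun j => ⟨polyK Fq (c j), c j, rfl⟩, (mulVec_eq_sum_col _).symm⟩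

omit [Fintype Fq] in
lemma minimaN_eq_sInf_span (N : (Fin d → Kt Fq) → ℝ) (Λ : Set (Fin d → Kt Fq)) :
    minimaN Fq N Λ d =
      sInf {r | 0 < r ∧ Submodule.span (Kt Fq) {u | u ∈ Λ ∧ N u ≤ r} = ⊤} := by
  simp only [minimaN, span_eq_top_iff_exists_linearIndependent (Module.finrank_fin_fun (Kt Fq)),
    Set.mem_ofPred_eq, forall_and, and_assoc, and_comm (a := LinearIndependent (Kt Fq) _)]

omit [Fintype Fq] in
lemma covRad_eq_sInf {N : (Fin d → Kt Fq) → ℝ} (hN : ∀ v, 0 ≤ N v) {Λ : Set (Fin d → Kt Fq)}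
    {R : ℝ} (hR : CoversWithin N Λ R) :
    covRad Fq N Λ = sInf {r | 0 < r ∧ CoversWithin N Λ r} := by
  have infDist_nonneg (w : Fin d → Kt Fq) : 0 ≤ ⨅ u : Λ, N (w - u.1) :=
    Real.iInf_nonneg fun u => hN _
  have infDist_le {r : ℝ} (hr : CoversWithin N Λ r) (w : Fin d → Kt Fq) :
      ⨅ u : Λ, N (w - u.1) ≤ r := by
    obtain ⟨u, hu, hwu⟩ := hr w
    exact ciInf_le_of_le ⟨0, Set.forall_mem_range.2 fun u => hN _⟩ ⟨u, hu⟩ hwu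
  have hΛ : Nonempty Λ := by
    obtain ⟨u, hu, -⟩ := hR 0
    exact ⟨⟨u, hu⟩⟩
  refine le_antisymm (le_csInf ?_ fun r hr => ciSup_le (infDist_le hr.2)) ?_
  · exact ⟨max R 1, by positivity, fun w =>
      (hR w).imp fun u hu => ⟨hu.1, hu.2.trans (le_max_left R 1)⟩⟩
  · refine le_of_forall_gt_imp_ge_of_dense fun r hr => csInf_le ⟨0, fun s hs => hs.1.le⟩ ?_
    refine ⟨(Real.iSup_nonneg infDist_nonneg).trans_lt hr, fun w => ?_⟩
    have hw : ⨅ u : Λ, N (w - u.1) < r :=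
      (le_ciSup ⟨R, Set.forall_mem_range.2 (infDist_le hR)⟩ w).trans_lt hr
    obtain ⟨u, hu⟩ := exists_lt_of_ciInf_lt hw
    exact ⟨u, u.2, hu.le⟩

end Lattice

theorem covRad_eq_inv_q_mul_lambda_d_general {d : ℕ} {N : Seminorm (Kt Fq) (Fin d → Kt Fq)}
    (hN : IsNonarchimedean N) {Λ : Submodule (polyK Fq).range (Fin d → Kt Fq)}
    (hΛ : Submodule.span (Kt Fq) (Λ : Set (Fin d → Kt Fq)) = ⊤) :
    covRad Fq N Λ = (Fintype.card Fq : ℝ)⁻¹ * minimaN Fq N Λ d := by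
  have hx : 1 < ‖Kx Fq‖ := one_lt_cast_card.trans_eq norm_Kx.symm
  have hx0 : ‖Kx Fq‖ ≠ 0 := (one_pos.trans hx).ne'
  obtain ⟨R, hR, hspan⟩ := exists_pos_span_setOf_le_eq_top hΛ N
  have hcov := coversWithin_of_span_eq_top hN coversWithin_range_polyK hR.le hspan
  rw [covRad_eq_sInf (apply_nonneg N) hcov, minimaN_eq_sInf_span, ← norm_Kx, ← smul_eq_mul,
    ← Real.sInf_smul_of_nonneg (by positivity)]
  congr 1
  ext r
  rw [Set.mem_inv_smul_set_iff₀ hx0, smul_eq_mul]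
  obtain ⟨s, rfl⟩ : ∃ s, r = ‖Kx Fq‖⁻¹ * s := ⟨‖Kx Fq‖ * r, (inv_mul_cancel_left₀ hx0 r).symm⟩
  have hpos : 0 < ‖Kx Fq‖⁻¹ * s ↔ 0 < s := mul_pos_iff_of_pos_left (by positivity)
  rw [mul_inv_cancel_left₀ hx0, Set.mem_ofPred_eq, Set.mem_ofPred_eq, hpos]
  exact and_congr_right
    (coversWithin_inv_mul_iff_span_eq_top hN Kx_mem_range_polyK hx coversWithin_range_polyK hΛ)

/-- The covering radius of a lattice with respect to the sup norm equals
`q⁻¹·λ_d(Λ)`. -/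
theorem covRad_eq_inv_q_mul_lambda_d {d : ℕ} (hd : 2 ≤ d)
    (g : Matrix (Fin d) (Fin d) (Kt Fq)) (hg : g.det ≠ 0) :
    covRad Fq (vnorm Fq) (lattice Fq g)
      = (Fintype.card Fq : ℝ)⁻¹ * minima Fq (lattice Fq g) d := by
  rw [minima, vnorm_eq_norm, ← coe_span_col_eq_lattice]
  refine covRad_eq_inv_q_mul_lambda_d_general Fq (N := normSeminorm (Kt Fq) (Fin d → Kt Fq))
    IsUltrametricDist.norm_add_le_max ?_
  rw [Submodule.span_span_of_tower, span_col_eq_top_of_det_ne_zero hg]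
end
end

section
/- Let d ≥ 2. For every unimodular lattice Λ ⊆ K̃^d, μ(Λ) ≤ q^{-d}, where μ(Λ) = sup_{w ∈ K̃^d} inf_{u ∈ Λ} ∏_{i=1}^d |w_i − u_i|. (Function field analogue of Minkowski's conjecture on the multiplicative covering radius.) -/
noncomputable section

open scoped Classical

variable (Fq : Type) [Field Fq] [Fintype Fq]

/-!
Every lattice `Λ = g R^d` has a complementary box: there are radii `q ^ (-b i)` such that the open
polydisc `B` with these radii satisfies `K̃^d = B ⊕ Λ` over the constants. Indeed, among the boxes
with `B + Λ = K̃^d` choose one with `dim (B ∩ Λ)` minimal. If some `u ∈ B ∩ Λ` had an `i`-th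
coordinate of the largest value allowed in `B`, one could lower the `i`-th radius by one step, using
`u` to supply the missing direction, and make the intersection smaller. Hence `x (B ∩ Λ) ⊆ B ∩ Λ`,
which forces `B ∩ Λ = 0` because `B` is bounded.

The decomposition determines the covolume, `|det g| = ∏ q ^ (-b i)`: approximating `t ^ b j e_j`
(with `t = x⁻¹`) modulo `B` by lattice vectors gives a basis of `Λ` that is diagonal up to smaller
terms. Finally, since values are discrete, writing `w = e + u` with `e ∈ B`, `u ∈ Λ` gives
`N(w - u) ≤ ∏ q ^ (-b i - 1) = |det g| q ^ (-d)`.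
-/

open Module Polynomial WithZero

section Valuation

variable {K Γ₀ ι : Type*} [Field K] [LinearOrderedCommGroupWithZero Γ₀]
  (v : Valuation K Γ₀)

theorem valuation_le_of_sub_diagonal_lt [DecidableEq ι] {A : Matrix ι ι K} {t : ι → K}
    (hA : ∀ i j, v ((A - Matrix.diagonal t) i j) < v (t i)) (i j : ι) : v (A i j) ≤ v (t i) := by
  have ht : v (Matrix.diagonal t i j) ≤ v (t i) := by
    rw [Matrix.diagonal_apply]
    split_ifs <;> simp
  simpa only [Matrix.sub_apply, sub_add_cancel] using v.map_add_le (hA i j).le ht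

variable [Fintype ι]

theorem valuation_dotProduct_lt {a u : ι → K} {α r : Γ₀} (hα : α ≠ 0) (hr : r ≠ 0)
    (ha : ∀ j, v (a j) ≤ α) (hu : ∀ j, v (u j) < r) : v (a ⬝ᵥ u) < α * r :=
  v.map_sum_lt (mul_ne_zero hα hr) fun j _ => by
    rw [map_mul]
    exact mul_lt_mul_of_le_of_lt_of_nonneg_of_pos (ha j) (hu j) zero_le (zero_lt_iff.2 hα)

theorem valuation_det_eq_one_of_sub_one_lt [DecidableEq ι] {A : Matrix ι ι K}
    (hA : ∀ i j, v ((A - 1) i j) < 1) : v A.det = 1 := by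
  have hA_le (i j) : v (A i j) ≤ 1 := by
    simpa using valuation_le_of_sub_diagonal_lt v (t := 1) (by simpa using hA) i j
  let A₀ : Matrix ι ι v.valuationSubring := .of fun i j => ⟨A i j, hA_le i j⟩
  have hA₀ : (IsLocalRing.residue v.valuationSubring).mapMatrix A₀ = 1 := by
    rw [← map_one (IsLocalRing.residue v.valuationSubring).mapMatrix, ← sub_eq_zero, ← map_sub]
    ext i j
    refine (IsLocalRing.residue_eq_zero_iff _).2 (v.mem_maximalIdeal_iff.2 ?_)
    convert hA i j
    rw [Matrix.sub_apply, Matrix.sub_apply, Matrix.one_apply, Matrix.one_apply]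
    split_ifs <;> rfl
  have hdet : IsUnit A₀.det := by
    rw [← IsLocalRing.residue_ne_zero_iff_isUnit, RingHom.map_det, hA₀, Matrix.det_one]
    exact one_ne_zero
  have hcoe : (A₀.det : K) = A.det := RingHom.map_det v.valuationSubring.subtype A₀
  rw [← hcoe]
  exact (Valuation.valuationSubring.integers v).isUnit_iff_valuation_eq_one.1 hdet

theorem valuation_det_eq_prod_of_sub_diagonal_lt [DecidableEq ι] {A : Matrix ι ι K} {t : ι → K}
    (hA : ∀ i j, v ((A - Matrix.diagonal t) i j) < v (t i)) : v A.det = ∏ i, v (t i) := by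
  have ht (i) : t i ≠ 0 := v.ne_zero_iff.1 (zero_le.trans_lt (hA i i)).ne'
  have h : v (Matrix.diagonal t⁻¹ * A).det = 1 := by
    refine valuation_det_eq_one_of_sub_one_lt v fun i j => ?_
    have hone : (1 : Matrix ι ι K) = Matrix.diagonal t⁻¹ * Matrix.diagonal t := by
      simp [Matrix.diagonal_mul_diagonal, ht]
    rw [hone, ← Matrix.mul_sub, Matrix.diagonal_mul, map_mul, Pi.inv_apply, map_inv₀]
    exact (inv_mul_lt_one₀ (zero_le.trans_lt (hA i i))).2 (hA i j)
  rw [Matrix.det_mul, Matrix.det_diagonal, map_mul] at h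
  simp only [Pi.inv_apply, Finset.prod_inv_distrib, map_inv₀, map_prod] at h
  exact (inv_mul_eq_one₀ (Finset.prod_ne_zero_iff.2 fun i _ => v.ne_zero_iff.2 (ht i))).1 h |>.symm

end Valuation

section LaurentSeries

variable {F : Type} [Field F]

theorem valuation_lt_exp_iff {f : Kt F} {n : ℤ} :
    Valued.v f < exp n ↔ ∀ k ≤ -n, f.coeff k = 0 := by
  have hexp : exp n = exp (-(1 - n)) * exp 1 := by
    rw [← exp_add]
    congr
    ring
  rw [hexp, lt_mul_exp_iff_le exp_ne_zero, LaurentSeries.valuation_le_iff_coeff_lt_eq_zero]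
  exact forall_congr' fun k => by rw [show k < 1 - n ↔ k ≤ -n by lia]

theorem valuation_eq_exp_neg_order {f : Kt F} (hf : f ≠ 0) :
    Valued.v f = exp (-f.order) := by
  refine (LaurentSeries.valuation_le_iff_coeff_lt_eq_zero F).2
    (fun _ => HahnSeries.coeff_eq_zero_of_lt_order) |>.antisymm (not_lt.1 fun h => ?_)
  exact hf (HahnSeries.coeff_order_eq_zero.1 (valuation_lt_exp_iff.1 h _ (neg_neg _).ge))

theorem polyK_monomial (n : ℕ) (a : F) :
    polyK F (monomial n a) = HahnSeries.single (-(n : ℤ)) a := by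
  change aeval (Kx F) (monomial n a) = _
  rw [aeval_monomial, LaurentSeries.algebraMap_apply, Kx, HahnSeries.single_pow,
    HahnSeries.C_apply, HahnSeries.single_mul_single]
  simp

theorem polyK_C (a : F) : polyK F (C a) = HahnSeries.C a := by
  rw [← monomial_zero_left, polyK_monomial, Nat.cast_zero, neg_zero, HahnSeries.C_apply]

theorem coeff_polyK_neg (p : F[X]) (n : ℕ) : (polyK F p).coeff (-n) = p.coeff n := by
  induction p using Polynomial.induction_on' with
  | add p r hp hr => rw [map_add, HahnSeries.coeff_add, hp, hr, coeff_add]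
  | monomial m a =>
    rw [polyK_monomial, HahnSeries.coeff_single, coeff_monomial]
    grind

theorem mem_degreeLT_of_valuation_polyK_lt {p : F[X]} {n : ℕ}
    (hp : Valued.v (polyK F p) < exp (n : ℤ)) : p ∈ degreeLT F n := by
  rw [mem_degreeLT, degree_lt_iff_coeff_zero]
  intro m hm
  rw [← coeff_polyK_neg]
  exact valuation_lt_exp_iff.1 hp _ (by lia)

theorem one_le_valuation_polyK {p : F[X]} (hp : p ≠ 0) : 1 ≤ Valued.v (polyK F p) := by
  contrapose! hp
  have h := mem_degreeLT_of_valuation_polyK_lt (n := 0) (by rwa [Nat.cast_zero, exp_zero])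
  rwa [mem_degreeLT, Nat.cast_zero, Nat.WithBot.lt_zero_iff, degree_eq_bot] at h

theorem polyK_injective : Function.Injective (polyK F) := by
  refine (injective_iff_map_eq_zero _).2 fun p hp => ?_
  by_contra hp0
  simpa [hp] using one_le_valuation_polyK hp0

theorem valuation_polyK_of_isUnit {p : F[X]} (hp : IsUnit p) : Valued.v (polyK F p) = 1 := by
  obtain ⟨q, hpq⟩ := hp.exists_right_inv
  have hmul : Valued.v (polyK F p) * Valued.v (polyK F q) = 1 := by
    rw [← map_mul, ← map_mul, hpq, map_one, map_one]
  refine (one_le_valuation_polyK hp.ne_zero).antisymm' ?_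
  rw [← hmul]
  exact le_mul_of_one_le_right' (one_le_valuation_polyK (right_ne_zero_of_mul_eq_one hpq))

theorem exists_valuation_sub_polyK_lt_one (f : Kt F) :
    ∃ p : F[X], Valued.v (f - polyK F p) < 1 := by
  refine ⟨∑ n ∈ Finset.range ((-f.order).toNat + 1), monomial n (f.coeff (-n)), ?_⟩
  rw [← exp_zero, valuation_lt_exp_iff]
  intro k hk
  obtain ⟨n, rfl⟩ := Int.exists_eq_neg_ofNat hk
  rw [HahnSeries.coeff_sub, coeff_polyK_neg, finsetSum_coeff]
  simp only [coeff_monomial, Finset.sum_ite_eq', Finset.mem_range]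
  split_ifs with hn
  · exact sub_self _
  · rw [sub_zero]
    exact HahnSeries.coeff_eq_zero_of_lt_order (by lia)

end LaurentSeries

section Box

variable {F : Type} [Field F] {ι : Type*}

/-- The open polydisc of vectors with `|u i| < q ^ (-b i)`. It is a subspace over the constants `F`
because the absolute value is ultrametric and trivial on `F`. -/
def box (b : ι → ℤ) : Submodule F (ι → Kt F) where
  carrier := {u | ∀ i, Valued.v (u i) < exp (-b i)}
  zero_mem' i := by simp
  add_mem' hu hw i := Valued.v.map_add_lt (hu i) (hw i)
  smul_mem' a u hu i := by
    rw [valuation_lt_exp_iff]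
    intro k hk
    rw [Pi.smul_apply, HahnSeries.coeff_smul, valuation_lt_exp_iff.1 (hu i) k hk, smul_zero]

theorem mem_box {b : ι → ℤ} {u : ι → Kt F} : u ∈ box b ↔ ∀ i, Valued.v (u i) < exp (-b i) :=
  Iff.rfl

theorem mem_box_iff_coeff {b : ι → ℤ} {u : ι → Kt F} :
    u ∈ box b ↔ ∀ i, ∀ k ≤ b i, (u i).coeff k = 0 := by
  simp only [mem_box, valuation_lt_exp_iff, neg_neg]

theorem box_antitone : Antitone (box : (ι → ℤ) → Submodule F (ι → Kt F)) :=
  fun _ _ hbc _ hu i => (hu i).trans_le (exp_le_exp.2 (neg_le_neg (hbc i)))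

theorem prod_valuation_le_of_mem_box [Fintype ι] {b : ι → ℤ} {u : ι → Kt F} (hu : u ∈ box b) :
    ∏ i, Valued.v (u i) ≤ (∏ i, exp (-b i)) * exp (-(Fintype.card ι : ℤ)) := by
  have hle (i) : Valued.v (u i) ≤ exp (-b i) * exp (-1) := by
    rw [← lt_mul_exp_iff_le (mul_ne_zero exp_ne_zero exp_ne_zero), mul_assoc, ← exp_add,
      neg_add_cancel, exp_zero, mul_one]
    exact hu i
  calc ∏ i, Valued.v (u i) ≤ ∏ i, exp (-b i) * exp (-1) := Finset.prod_le_prod' fun i _ => hle i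
    _ = (∏ i, exp (-b i)) * exp (-(Fintype.card ι : ℤ)) := by
      rw [Finset.prod_mul_distrib, Finset.prod_const, Finset.card_univ, ← exp_nsmul, nsmul_eq_mul,
        mul_neg_one]

theorem mulVec_mem_box [Fintype ι] {b : ι → ℤ} {A : Matrix ι ι (Kt F)} {u : ι → Kt F}
    (hA : ∀ i j, Valued.v (A i j) ≤ exp (-b i)) (hu : ∀ j, Valued.v (u j) < 1) :
    A.mulVec u ∈ box b := fun i => by
  rw [← mul_one (exp (-b i))]
  exact valuation_dotProduct_lt Valued.v exp_ne_zero one_ne_zero (hA i) hu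

theorem box_le_box_add_single_sup_span [DecidableEq ι] {b : ι → ℤ} {u : ι → Kt F} {i : ι}
    (hu : u ∈ box b) (hu' : u ∉ box (b + Pi.single i 1)) :
    box b ≤ box (b + Pi.single i 1) ⊔ Submodule.span F {u} := by
  have mem_iff {w : ι → Kt F} (hw : w ∈ box b) :
      w ∈ box (b + Pi.single i 1) ↔ (w i).coeff (b i + 1) = 0 := by
    rw [mem_box_iff_coeff] at hw ⊢
    refine ⟨fun h => h i _ (by simp), fun h j k hk => ?_⟩
    rcases eq_or_ne j i with rfl | hji
    · rw [Pi.add_apply, Pi.single_eq_same] at hk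
      rcases hk.lt_or_eq with hlt | rfl
      · exact hw j k (by lia)
      · exact h
    · exact hw j k (by simpa [hji] using hk)
  intro w hw
  let a : F := (w i).coeff (b i + 1) / (u i).coeff (b i + 1)
  have ha : w - a • u ∈ box (b + Pi.single i 1) := by
    rw [mem_iff (sub_mem hw (Submodule.smul_mem _ a hu)), Pi.sub_apply, Pi.smul_apply,
      HahnSeries.coeff_sub, HahnSeries.coeff_smul, smul_eq_mul,
      div_mul_cancel₀ _ (mt (mem_iff hu).2 hu'), sub_self]
  rw [← sub_add_cancel w (a • u)]
  exact Submodule.add_mem_sup ha (Submodule.smul_mem _ a (Submodule.mem_span_singleton_self u))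

theorem Kx_smul_mem_box_iff {b : ι → ℤ} {u : ι → Kt F} :
    Kx F • u ∈ box b ↔ u ∈ box (b + 1) := by
  have hx : Valued.v (Kx F) = exp 1 := by rw [Kx, LaurentSeries.valuation_single_zpow, neg_neg]
  refine forall_congr' fun i => ?_
  rw [Pi.smul_apply, smul_eq_mul, map_mul, hx,
    show exp (-b i) = exp 1 * exp (-(b + 1) i) by rw [← exp_add]; simp]
  exact mul_lt_mul_iff_right₀ exp_pos

end Box

section Lattice

variable {F : Type} [Field F] {d : ℕ}

/-- The `F`-linear map `c ↦ g c` on vectors of polynomials; its range is the lattice `g R^d`, here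
regarded as an `F`-subspace of `K̃^d`. -/
def latticeMap (g : Matrix (Fin d) (Fin d) (Kt F)) : (Fin d → F[X]) →ₗ[F] (Fin d → Kt F) where
  toFun c := g.mulVec fun j => polyK F (c j)
  map_add' c e := by
    rw [← Matrix.mulVec_add]
    congr 1
    funext j
    exact map_add _ _ _
  map_smul' a c := by
    have hsmul (w : Fin d → Kt F) : a • w = (HahnSeries.C a : Kt F) • w := by
      funext j
      exact HahnSeries.C_mul_eq_smul.symm
    rw [RingHom.id_apply, hsmul, ← Matrix.mulVec_smul]
    congr 1
    funext j
    rw [Pi.smul_apply, Pi.smul_apply, smul_eq_C_mul, map_mul, polyK_C, smul_eq_mul]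

theorem latticeMap_apply (g : Matrix (Fin d) (Fin d) (Kt F)) (c : Fin d → F[X]) :
    latticeMap g c = g.mulVec fun j => polyK F (c j) :=
  rfl

theorem latticeMap_X_smul (g : Matrix (Fin d) (Fin d) (Kt F)) (c : Fin d → F[X]) :
    latticeMap g ((X : F[X]) • c) = Kx F • latticeMap g c := by
  rw [latticeMap_apply, latticeMap_apply, ← Matrix.mulVec_smul]
  congr 1
  funext j
  simp [polyK]

theorem latticeMap_mul_map (g : Matrix (Fin d) (Fin d) (Kt F)) (P : Matrix (Fin d) (Fin d) F[X])
    (c : Fin d → F[X]) : latticeMap (g * P.map (polyK F)) c = latticeMap g (P.mulVec c) := by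
  rw [latticeMap_apply, latticeMap_apply, ← Matrix.mulVec_mulVec]
  congr 1
  funext j
  exact (RingHom.map_mulVec (polyK F) P c j).symm

theorem latticeMap_injective {g : Matrix (Fin d) (Fin d) (Kt F)} (hg : g.det ≠ 0) :
    Function.Injective (latticeMap g) := by
  have hg_inj := Matrix.mulVec_injective_of_isUnit ((Matrix.isUnit_iff_isUnit_det g).2 hg.isUnit)
  exact fun _ _ h => funext fun j => polyK_injective (congrFun (hg_inj h) j)

theorem codisjoint_box_range_latticeMap {b : Fin d → ℤ} {g : Matrix (Fin d) (Fin d) (Kt F)}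
    (hdet : g.det ≠ 0) (hg : ∀ i j, Valued.v (g i j) ≤ exp (-b i)) :
    Codisjoint (box b) (latticeMap g).range := by
  rw [codisjoint_iff, Submodule.eq_top_iff']
  intro w
  choose c hc using fun j => exists_valuation_sub_polyK_lt_one (g⁻¹.mulVec w j)
  have hw : w = g.mulVec (g⁻¹.mulVec w - fun j => polyK F (c j)) + latticeMap g c := by
    rw [latticeMap_apply, ← Matrix.mulVec_add, sub_add_cancel, Matrix.mulVec_mulVec,
      Matrix.mul_nonsing_inv _ hdet.isUnit, Matrix.one_mulVec]
  rw [hw]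
  exact Submodule.add_mem_sup (mulVec_mem_box hg hc) ⟨c, rfl⟩

theorem exists_valuation_le_exp (g : Matrix (Fin d) (Fin d) (Kt F)) :
    ∃ m : ℤ, ∀ i j, Valued.v (g i j) ≤ exp m := by
  obtain ⟨m, hm⟩ := Finite.exists_le fun p : Fin d × Fin d => log (Valued.v (g p.1 p.2))
  exact ⟨m, fun i j => le_exp_of_log_le (hm (i, j))⟩

theorem finiteDimensional_box_inf_range_latticeMap {g : Matrix (Fin d) (Fin d) (Kt F)}
    (hg : g.det ≠ 0) (b : Fin d → ℤ) :
    FiniteDimensional F ↥(box b ⊓ (latticeMap g).range) := by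
  obtain ⟨m, hm⟩ := exists_valuation_le_exp g⁻¹
  obtain ⟨r, hr⟩ := Finite.exists_le (-b)
  let D : Submodule F (Fin d → F[X]) := .pi Set.univ fun _ => degreeLT F (m + r).toNat
  have hD : D.FG := Submodule.fg_pi fun _ => .of_finite
  suffices hle : box b ⊓ (latticeMap g).range ≤ D.map (latticeMap g) by
    have : FiniteDimensional F (D.map (latticeMap g)) := .of_fg (hD.map _)
    exact Submodule.finiteDimensional_of_le hle
  rintro _ ⟨hc, c, rfl⟩
  refine ⟨c, fun j _ => mem_degreeLT_of_valuation_polyK_lt ?_, rfl⟩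
  have hinv : g⁻¹.mulVec (latticeMap g c) = fun j => polyK F (c j) := by
    rw [latticeMap_apply, Matrix.mulVec_mulVec, Matrix.nonsing_inv_mul _ hg.isUnit,
      Matrix.one_mulVec]
  calc Valued.v (polyK F (c j)) = Valued.v (g⁻¹ j ⬝ᵥ latticeMap g c) := by
        exact congrArg Valued.v (congrFun hinv j).symm
    _ < exp m * exp r := valuation_dotProduct_lt Valued.v exp_ne_zero exp_ne_zero (hm j)
        fun i => (hc i).trans_le (exp_le_exp.2 (hr i))
    _ = exp (m + r) := (exp_add m r).symm
    _ ≤ exp ((m + r).toNat : ℤ) := exp_le_exp.2 (m + r).self_le_toNat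

theorem disjoint_box_range_latticeMap {g : Matrix (Fin d) (Fin d) (Kt F)} {b : Fin d → ℤ}
    (h : ∀ i, box b ⊓ (latticeMap g).range ≤ box (b + Pi.single i 1)) :
    Disjoint (box b) (latticeMap g).range := by
  have hone : box b ⊓ (latticeMap g).range ≤ box (b + 1) := fun u hu i => by
    simpa using h i hu i
  -- Multiplication by `x` preserves the lattice and maps `box (b + 1)` onto `box b`.
  have hall (n : ℕ) : box b ⊓ (latticeMap g).range ≤ box (b + (n : Fin d → ℤ)) := by
    induction n with
    | zero => simp
    | succ n ih =>
      rintro _ ⟨hu, c, rfl⟩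
      have hx : latticeMap g ((X : F[X]) • c) ∈ box (b + (n : Fin d → ℤ)) := by
        refine ih ⟨?_, _, rfl⟩
        rw [latticeMap_X_smul]
        exact Kx_smul_mem_box_iff.2 (hone ⟨hu, c, rfl⟩)
      rw [latticeMap_X_smul, Kx_smul_mem_box_iff] at hx
      rwa [Nat.cast_succ, ← add_assoc]
  rw [Submodule.disjoint_def]
  intro u hub hug
  ext i k
  exact mem_box_iff_coeff.1 (hall (k - b i).toNat ⟨hub, hug⟩) i k (by
    rw [Pi.add_apply, Pi.natCast_apply]
    lia)

theorem exists_isCompl_box_range_latticeMap {g : Matrix (Fin d) (Fin d) (Kt F)} (hg : g.det ≠ 0) :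
    ∃ b : Fin d → ℤ, IsCompl (box b) (latticeMap g).range := by
  obtain ⟨m, hm⟩ := exists_valuation_le_exp g
  obtain ⟨b, hb, hmin⟩ := exists_minimalFor_of_wellFoundedLT
    (fun b => Codisjoint (box b) (latticeMap g).range)
    (fun b => finrank F ↥(box b ⊓ (latticeMap g).range))
    ⟨fun _ => -m, codisjoint_box_range_latticeMap hg fun i j => (hm i j).trans (by simp)⟩
  refine ⟨b, disjoint_box_range_latticeMap fun i => ?_, hb⟩
  by_contra hi
  obtain ⟨u, ⟨hub, hug⟩, hu⟩ := SetLike.not_le_iff_exists.1 hi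
  have hcod : Codisjoint (box (b + Pi.single i 1)) (latticeMap g).range := by
    rw [codisjoint_iff_le_sup] at hb ⊢
    refine hb.trans (sup_le ((box_le_box_add_single_sup_span hub hu).trans ?_) le_sup_right)
    exact sup_le_sup_left ((Submodule.span_singleton_le_iff_mem u _).2 hug) _
  have hlt : box (b + Pi.single i 1) ⊓ (latticeMap g).range < box b ⊓ (latticeMap g).range :=
    (inf_le_inf_right _ (box_antitone (by simp))).lt_of_not_ge fun h => hu (h ⟨hub, hug⟩).1
  have := finiteDimensional_box_inf_range_latticeMap hg b
  have hfin := Submodule.finrank_lt_finrank_of_lt hlt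
  exact hfin.not_ge (hmin hcod hfin.le)

theorem exists_mul_map_polyK_sub_diagonal_lt {g : Matrix (Fin d) (Fin d) (Kt F)} {b : Fin d → ℤ}
    (h : Codisjoint (box b) (latticeMap g).range) :
    ∃ P : Matrix (Fin d) (Fin d) F[X], ∀ i j, Valued.v ((g * P.map (polyK F) -
      (Matrix.diagonal fun k => HahnSeries.single (b k) 1 : Matrix _ _ (Kt F))) i j) <
        exp (-b i) := by
  have hcol (j : Fin d) :
      ∃ c, latticeMap g c - Pi.single j (HahnSeries.single (b j) 1) ∈ box b := by
    obtain ⟨u, hu, _, ⟨c, rfl⟩, huc⟩ := Submodule.mem_sup.1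
      (h.eq_top ▸ Submodule.mem_top (x := (Pi.single j (HahnSeries.single (b j) 1) : Fin d → Kt F)))
    refine ⟨c, ?_⟩
    rw [← huc, sub_add_cancel_right]
    exact neg_mem hu
  choose c hc using hcol
  refine ⟨Matrix.of fun i j => c j i, fun i j => ?_⟩
  convert hc j i using 2
  rw [Matrix.sub_apply, Pi.sub_apply, Matrix.diagonal_apply, Pi.single_apply]
  congr 1
  split_ifs with hij
  · rw [hij]
  · rfl

theorem isUnit_of_codisjoint_box_range_latticeMap_mul {g : Matrix (Fin d) (Fin d) (Kt F)}
    {P : Matrix (Fin d) (Fin d) F[X]} {b : Fin d → ℤ} (hg : g.det ≠ 0)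
    (hd : Disjoint (box b) (latticeMap g).range)
    (hP : Codisjoint (box b) (latticeMap (g * P.map (polyK F))).range) : IsUnit P := by
  refine Matrix.mulVec_surjective_iff_isUnit.1 fun c => ?_
  obtain ⟨u, hu, _, ⟨p, rfl⟩, hup⟩ := Submodule.mem_sup.1
    (hP.eq_top ▸ Submodule.mem_top (x := latticeMap g c))
  rw [latticeMap_mul_map] at hup
  have hu_mem : u ∈ (latticeMap g).range :=
    ⟨c - P.mulVec p, by rw [map_sub, ← hup, add_sub_cancel_right]⟩
  rw [Submodule.disjoint_def.1 hd u hu hu_mem, zero_add] at hup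
  exact ⟨p, latticeMap_injective hg hup⟩

theorem valuation_det_eq_of_isCompl {g : Matrix (Fin d) (Fin d) (Kt F)} {b : Fin d → ℤ}
    (h : IsCompl (box b) (latticeMap g).range) : Valued.v g.det = ∏ i, exp (-b i) := by
  obtain ⟨P, hP⟩ := exists_mul_map_polyK_sub_diagonal_lt h.codisjoint
  simp only [← LaurentSeries.valuation_single_zpow F] at hP ⊢
  have hdet := valuation_det_eq_prod_of_sub_diagonal_lt Valued.v hP
  have hne : (g * P.map (polyK F)).det ≠ 0 := by
    rw [← Valued.v.ne_zero_iff, hdet]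
    exact Finset.prod_ne_zero_iff.2 fun i _ => by simp
  -- `g P R^d ⊆ g R^d` also covers with `box b`, so it equals the complement `g R^d`.
  have hPunit : IsUnit P :=
    isUnit_of_codisjoint_box_range_latticeMap_mul
      (left_ne_zero_of_mul (Matrix.det_mul g _ ▸ hne)) h.disjoint
      (codisjoint_box_range_latticeMap hne fun i j =>
        (valuation_le_of_sub_diagonal_lt Valued.v hP i j).trans_eq
          (LaurentSeries.valuation_single_zpow F _))
  have hPdet : Valued.v (P.map (polyK F)).det = 1 := by
    rw [← RingHom.mapMatrix_apply, ← RingHom.map_det]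
    exact valuation_polyK_of_isUnit ((Matrix.isUnit_iff_isUnit_det P).1 hPunit)
  rw [← hdet, Matrix.det_mul, map_mul, hPdet, mul_one]

theorem exists_mem_lattice_prod_valuation_sub_le {g : Matrix (Fin d) (Fin d) (Kt F)}
    (hg : g.det ≠ 0) (w : Fin d → Kt F) :
    ∃ u ∈ lattice F g, ∏ i, Valued.v ((w - u) i) ≤ Valued.v g.det * exp (-(d : ℤ)) := by
  obtain ⟨b, hb⟩ := exists_isCompl_box_range_latticeMap hg
  obtain ⟨e, he, _, ⟨c, rfl⟩, hw⟩ := Submodule.mem_sup.1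
    (hb.codisjoint.eq_top ▸ Submodule.mem_top (x := w))
  refine ⟨latticeMap g c, ⟨c, rfl⟩, ?_⟩
  rw [← hw, add_sub_cancel_right, valuation_det_eq_of_isCompl hb]
  simpa only [Fintype.card_fin] using prod_valuation_le_of_mem_box he

end Lattice

section AbsoluteValue

theorem one_lt_card_nnreal : (1 : NNReal) < Fintype.card Fq :=
  Nat.one_lt_cast.2 Fintype.one_lt_card

theorem toNNReal_exp {e : NNReal} (he : e ≠ 0) (n : ℤ) :
    WithZeroMulInt.toNNReal he (exp n) = e ^ n :=
  WithZeroMulInt.toNNReal_neg_apply he exp_ne_zero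

theorem Kabs_eq_toNNReal (f : Kt Fq) :
    Kabs Fq f = WithZeroMulInt.toNNReal (one_lt_card_nnreal Fq).ne_zero (Valued.v f) := by
  rw [Kabs]
  split_ifs with hf
  · simp [hf]
  · simp [valuation_eq_exp_neg_order hf, toNNReal_exp]

theorem Nprod_eq_toNNReal {d : ℕ} (u : Fin d → Kt Fq) : Nprod Fq u =
    WithZeroMulInt.toNNReal (one_lt_card_nnreal Fq).ne_zero (∏ i, Valued.v (u i)) := by
  simp only [Nprod, Kabs_eq_toNNReal, map_prod, NNReal.coe_prod]

theorem Nprod_nonneg {d : ℕ} (u : Fin d → Kt Fq) : 0 ≤ Nprod Fq u :=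
  (Nprod_eq_toNNReal Fq u).symm ▸ NNReal.coe_nonneg _

end AbsoluteValue

theorem mink_le_general {d : ℕ} (g : Matrix (Fin d) (Fin d) (Kt Fq)) (hg : g.det ≠ 0) :
    mink Fq (lattice Fq g) ≤ Kabs Fq g.det * (Fintype.card Fq : ℝ) ^ (-(d : ℤ)) := by
  refine ciSup_le fun w => ?_
  obtain ⟨u, hu, hle⟩ := exists_mem_lattice_prod_valuation_sub_le hg w
  have hbdd : BddBelow (Set.range fun u : lattice Fq g => Nprod Fq (w - u.1)) :=
    ⟨0, Set.forall_mem_range.2 fun _ => Nprod_nonneg Fq _⟩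
  refine (ciInf_le hbdd ⟨u, hu⟩).trans ?_
  have h := (WithZeroMulInt.toNNReal_strictMono (one_lt_card_nnreal Fq)).monotone hle
  rw [map_mul, toNNReal_exp, ← NNReal.coe_le_coe] at h
  simpa [Nprod_eq_toNNReal, Kabs_eq_toNNReal] using h

/-- function field analogue of Minkowski's conjecture.
For every unimodular lattice `Λ ⊆ K̃^d`, `μ(Λ) ≤ q^{-d}`. -/
theorem mink_le {d : ℕ} (hd : 2 ≤ d)
    (g : Matrix (Fin d) (Fin d) (Kt Fq)) (hg : Kabs Fq g.det = 1) :
    mink Fq (lattice Fq g) ≤ (Fintype.card Fq : ℝ) ^ (-(d : ℤ)) := by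
  have hdet : g.det ≠ 0 := fun h => by simp [Kabs, h] at hg
  simpa [hg] using mink_le_general Fq g hdet
end
end
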